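/- Let A be a nilpotent, finite-dimensional associative algebra over ℂ such that Z(A) is not contained in A'. Then there exists a 1-dimensional ideal Z of A and an ideal I of A such that A = I ⊕ Z (internal direct sum of ideals, with all products between I and Z zero) and t(I) + 2·dim(I') = t(A). -/

import Mathlib

/-!
Pick `z ∈ Z(A)` outside `A'` and a linear functional `φ` with `φ z = 1` vanishing on `A'`.
Then `I = ker φ` contains `A'`, so it is an ideal, and `A = I ⊕ ℂz` with projection `π : A → I`
along `z`, which is multiplicative because `z` annihilates `A`.

A bilinear form on `A` is the same as a quadruple `(g, u, v, c)`: its restriction `g` to `I × I`,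
the functionals `u = f(z, ·)` and `v = f(·, z)` on `I`, and the scalar `c = f(z, z)`
(`assemble`). The cocycle condition on `f` says exactly that `g` is a cocycle on `I` and that `u`
and `v` vanish on `I'` (`map_assemble_cocycles`), since `f(xy, z) = f(x, yz) = 0`. Coboundaries of
`A` correspond to `(g, 0, 0, 0)` with `g` a coboundary of `I` (`map_assemble_coboundaries`). Hence
`dim M(A) = dim M(I) + 2 (dim I - dim I') + 1`, and the identity for `t` follows from
`(dim I + 1)² = (dim I)² + 2 dim I + 1`.
-/

open Module

noncomputable section Defs

variable (A : Type*) [NonUnitalRing A] [Module ℂ A]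

/-- `A` is nilpotent: there is an `n` such that every product of `n` elements of `A`
is zero (by associativity it suffices to consider left-normed products). -/
def IsNilpotentAlgebra : Prop :=
  ∃ n : ℕ, ∀ (x : A) (l : List A), l.length + 1 = n → l.foldl (· * ·) x = 0

/-- The derived ideal `A' = AA`: the linear span of all products in `A`. -/
def derivedIdeal : Submodule ℂ A :=
  Submodule.span ℂ {a : A | ∃ x y : A, x * y = a}

/-- The space of 2-cocycles: bilinear maps `f : A × A → ℂ` with `f(xy,z) = f(x,yz)`. -/
def Cocycles : Submodule ℂ (A →ₗ[ℂ] A →ₗ[ℂ] ℂ) where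
  carrier := {f | ∀ x y z : A, f (x * y) z = f x (y * z)}
  add_mem' := by
    intro f g hf hg x y z
    simp [hf x y z, hg x y z]
  zero_mem' := by
    intro x y z
    simp
  smul_mem' := by
    intro c f hf x y z
    simp [hf x y z]

/-- The space of 2-coboundaries: bilinear maps of the form `f(x,y) = g(xy)`. -/
def Coboundaries : Submodule ℂ (A →ₗ[ℂ] A →ₗ[ℂ] ℂ) where
  carrier := {f | ∃ g : A →ₗ[ℂ] ℂ, ∀ x y : A, f x y = g (x * y)}
  add_mem' := by
    rintro f₁ f₂ ⟨g₁, h₁⟩ ⟨g₂, h₂⟩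
    exact ⟨g₁ + g₂, fun x y => by simp [h₁ x y, h₂ x y]⟩
  zero_mem' := ⟨0, by simp⟩
  smul_mem' := by
    rintro c f ⟨g, h⟩
    exact ⟨c • g, fun x y => by simp [h x y]⟩

/-- The dimension of the multiplier `M(A) = H²(A, ℂ)`, the quotient of the cocycles
by the coboundaries. -/
def multDim : ℕ :=
  Module.finrank ℂ ((Cocycles A).map (Coboundaries A).mkQ)

/-- `t(A) = (dim A)² - dim M(A)`. -/
def tInv : ℤ :=
  (Module.finrank ℂ A : ℤ) ^ 2 - (multDim A : ℤ)

/-- A (two-sided) ideal of `A`. -/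
def IsIdealOf (I : Submodule ℂ A) : Prop :=
  ∀ a : A, ∀ x ∈ I, a * x ∈ I ∧ x * a ∈ I

/-- `A ≅ J₁ ⊕ A(k)`: `A` has a basis `x, z, a₁, …, a_k` whose only nonzero
product of basis vectors is `x·x = z`. -/
def IsJ1SumAbelian (k : ℕ) : Prop :=
  ∃ b : Basis (Fin (k + 2)) ℂ A,
    b 0 * b 0 = b 1 ∧ ∀ i j : Fin (k + 2), ¬(i = 0 ∧ j = 0) → b i * b j = 0

/-- `A ≅ J₁`: `A` has a basis `x, z` with only nonzero product `x·x = z`. -/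
def IsJ1 : Prop := IsJ1SumAbelian A 0

/-- `A ≅ C₃`: `A` has a basis `x, z, z'` with only nonzero products
`x·x = z`, `x·z = z·x = z'`. -/
def IsC3 : Prop :=
  ∃ b : Basis (Fin 3) ℂ A,
    b 0 * b 0 = b 1 ∧ b 0 * b 1 = b 2 ∧ b 1 * b 0 = b 2 ∧
    b 0 * b 2 = 0 ∧ b 2 * b 0 = 0 ∧ b 1 * b 1 = 0 ∧ b 1 * b 2 = 0 ∧
    b 2 * b 1 = 0 ∧ b 2 * b 2 = 0

variable [SMulCommClass ℂ A A] [IsScalarTower ℂ A A]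

/-- The center `Z(A) = {z : za = az = 0 for all a}`. -/
def centerSub : Submodule ℂ A where
  carrier := {z | ∀ a : A, z * a = 0 ∧ a * z = 0}
  add_mem' := by
    intro x y hx hy a
    constructor
    · rw [add_mul, (hx a).1, (hy a).1, add_zero]
    · rw [mul_add, (hx a).2, (hy a).2, add_zero]
  zero_mem' := by
    intro a
    simp
  smul_mem' := by
    intro c x hx a
    constructor
    · rw [smul_mul_assoc, (hx a).1, smul_zero]
    · rw [mul_smul_comm, (hx a).2, smul_zero]

/-- `A` is extra special: `Z(A) = A'` and `dim Z(A) = 1`. -/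
def IsExtraSpecialAlg : Prop :=
  centerSub A = derivedIdeal A ∧ Module.finrank ℂ (centerSub A) = 1

/-- `A ≅ E ⊕ A(k)` for some extra special algebra `E` of dimension `n`:
`A` decomposes as an internal direct sum of a subalgebra `E` which is extra special
of dimension `n` and a central subspace `Z` of dimension `k` all of whose products
with `A` vanish. -/
def HasExtraSpecialDecomp (n k : ℕ) : Prop :=
  ∃ (E : NonUnitalSubalgebra ℂ A) (Z : Submodule ℂ A),
    IsCompl E.toSubmodule Z ∧ (∀ z ∈ Z, ∀ a : A, z * a = 0 ∧ a * z = 0) ∧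
    IsExtraSpecialAlg ↥E ∧ Module.finrank ℂ ↥E = n ∧ Module.finrank ℂ ↥Z = k

end Defs

section Assemble

variable {A B : Type*} [AddCommGroup A] [Module ℂ A] [AddCommGroup B] [Module ℂ B]

/-- The bilinear form on `A` with components `(g, u, v, c)` relative to a projection `π : A → B`
and a functional `φ` on `A`:
`f(x, y) = g(πx, πy) + φ(x) u(πy) + φ(y) v(πx) + c φ(x) φ(y)`. -/
def assemble (π : A →ₗ[ℂ] B) (φ : A →ₗ[ℂ] ℂ) :
    ((B →ₗ[ℂ] B →ₗ[ℂ] ℂ) × (Dual ℂ B × (Dual ℂ B × ℂ))) →ₗ[ℂ] (A →ₗ[ℂ] A →ₗ[ℂ] ℂ) where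
  toFun p := LinearMap.mk₂ ℂ
    (fun x y => p.1 (π x) (π y) + φ x * p.2.1 (π y) + φ y * p.2.2.1 (π x) + p.2.2.2 * φ x * φ y)
    (by intros; simp; ring) (by intros; simp; ring) (by intros; simp; ring) (by intros; simp; ring)
  map_add' p q := by ext x y; simp; ring
  map_smul' c p := by ext x y; simp; ring

@[simp] lemma assemble_apply (π : A →ₗ[ℂ] B) (φ : A →ₗ[ℂ] ℂ)
    (p : (B →ₗ[ℂ] B →ₗ[ℂ] ℂ) × (Dual ℂ B × (Dual ℂ B × ℂ))) (x y : A) :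
    assemble π φ p x y = p.1 (π x) (π y) + φ x * p.2.1 (π y) + φ y * p.2.2.1 (π x)
      + p.2.2.2 * φ x * φ y := rfl

end Assemble

lemma mul_mem_derivedIdeal {A : Type*} [NonUnitalRing A] [Module ℂ A] (x y : A) :
    x * y ∈ derivedIdeal A := Submodule.subset_span ⟨x, y, rfl⟩

lemma coboundaries_le_cocycles (A : Type*) [NonUnitalRing A] [Module ℂ A] :
    Coboundaries A ≤ Cocycles A := by
  rintro f ⟨g, h⟩ x y z
  rw [h, h, mul_assoc]

lemma finrank_map_mkQ_add {V : Type*} [AddCommGroup V] [Module ℂ V] [FiniteDimensional ℂ V]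
    {P Q : Submodule ℂ V} (h : P ≤ Q) : finrank ℂ (Q.map P.mkQ) + finrank ℂ P = finrank ℂ Q := by
  have key := LinearMap.finrank_range_add_finrank_ker (P.mkQ.domRestrict Q)
  have hker : LinearMap.ker (P.mkQ.domRestrict Q) = P.comap Q.subtype := by
    ext x; simp
  rwa [hker, LinearMap.range_domRestrict,
    (Submodule.comapSubtypeEquivOfLe h).finrank_eq] at key

lemma multDim_add_finrank (A : Type*) [NonUnitalRing A] [Module ℂ A] [FiniteDimensional ℂ A] :
    multDim A + finrank ℂ (Coboundaries A) = finrank ℂ (Cocycles A) :=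
  finrank_map_mkQ_add (coboundaries_le_cocycles A)

lemma finrank_submodule_prod {V W : Type*} [AddCommGroup V] [Module ℂ V] [AddCommGroup W]
    [Module ℂ W] [FiniteDimensional ℂ V] [FiniteDimensional ℂ W] (p : Submodule ℂ V)
    (q : Submodule ℂ W) : finrank ℂ (p.prod q) = finrank ℂ p + finrank ℂ q := by
  rw [← finrank_prod]
  exact LinearEquiv.finrank_eq
    { toFun := fun x => (⟨x.1.1, x.2.1⟩, ⟨x.1.2, x.2.2⟩)
      invFun := fun x => ⟨(x.1, x.2), x.1.2, x.2.2⟩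
      map_add' := fun _ _ => rfl
      map_smul' := fun _ _ => rfl }

/-- The data of a splitting `A = B ⊕ ℂz` of algebras in which `z` annihilates `A`: the inclusion
`ι` of `B`, the projection `π` onto `B`, and the coordinate `φ` along `z`. -/
structure CentralSplitting (A B : Type*) [NonUnitalRing A] [Module ℂ A] [NonUnitalRing B]
    [Module ℂ B] where
  ι : B →ₗ[ℂ] A
  π : A →ₗ[ℂ] B
  φ : A →ₗ[ℂ] ℂ
  z : A
  decomp : ∀ x, ι (π x) + φ x • z = x
  π_ι : ∀ b, π (ι b) = b
  φ_ι : ∀ b, φ (ι b) = 0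
  π_z : π z = 0
  φ_z : φ z = 1
  ι_mul : ∀ a b, ι (a * b) = ι a * ι b
  π_mul : ∀ x y, π (x * y) = π x * π y
  φ_mul : ∀ x y, φ (x * y) = 0
  z_mul : ∀ x, z * x = 0
  mul_z : ∀ x, x * z = 0

namespace CentralSplitting

variable {A B : Type*} [NonUnitalRing A] [Module ℂ A] [NonUnitalRing B] [Module ℂ B]
  (s : CentralSplitting A B)

lemma assemble_injective : Function.Injective (assemble s.π s.φ) := by
  rw [← LinearMap.ker_eq_bot, LinearMap.ker_eq_bot']
  rintro ⟨g, u, v, c⟩ h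
  have h' : ∀ x y, assemble s.π s.φ (g, u, v, c) x y = 0 := by intro x y; rw [h]; rfl
  simp only [assemble_apply] at h'
  refine Prod.ext ?_ (Prod.ext ?_ (Prod.ext ?_ ?_))
  · ext a b; simpa [s.π_ι, s.φ_ι] using h' (s.ι a) (s.ι b)
  · ext b; simpa [s.π_ι, s.φ_ι, s.π_z, s.φ_z] using h' s.z (s.ι b)
  · ext b; simpa [s.π_ι, s.φ_ι, s.π_z, s.φ_z] using h' (s.ι b) s.z
  · simpa [s.π_z, s.φ_z] using h' s.z s.z

/-- A form is recovered from its components with respect to the splitting. -/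
lemma assemble_components (f : A →ₗ[ℂ] A →ₗ[ℂ] ℂ) :
    assemble s.π s.φ
      (f.compl₁₂ s.ι s.ι, (f s.z).comp s.ι, (f.flip s.z).comp s.ι, f s.z s.z) = f := by
  ext x y
  conv_rhs => rw [← s.decomp x, ← s.decomp y]
  simp
  ring

/-- For a cocycle `f`, the functionals `f(z, ·)` and `f(·, z)` kill products because
`f(z, ab) = f(za, b) = 0` and `f(ab, z) = f(a, bz) = 0`. -/
lemma map_assemble_cocycles :
    ((Cocycles B).prod ((derivedIdeal B).dualAnnihilator.prod
      ((derivedIdeal B).dualAnnihilator.prod ⊤))).map (assemble s.π s.φ) = Cocycles A := by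
  apply le_antisymm
  · rintro _ ⟨⟨g, u, v, c⟩, ⟨hg, hu, hv, -⟩, rfl⟩ x y w
    have hu' : ∀ a b, u (a * b) = 0 := fun a b =>
      (Submodule.mem_dualAnnihilator u).1 hu _ (mul_mem_derivedIdeal a b)
    have hv' : ∀ a b, v (a * b) = 0 := fun a b =>
      (Submodule.mem_dualAnnihilator v).1 hv _ (mul_mem_derivedIdeal a b)
    have hg' : ∀ a b c, g (a * b) c = g a (b * c) := hg
    simp [s.π_mul, s.φ_mul, hu', hv', hg']
  · intro f hf
    have hf' : ∀ x y w, f (x * y) w = f x (y * w) := hf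
    refine ⟨_, ⟨?_, ?_, ?_, trivial⟩, s.assemble_components f⟩
    · intro a b c
      simp [s.ι_mul, hf']
    · refine (Submodule.mem_dualAnnihilator _).2 fun w hw => ?_
      refine (Submodule.span_le (p := LinearMap.ker ((f s.z).comp s.ι))).2 ?_ hw
      rintro _ ⟨a, b, rfl⟩
      simp [s.ι_mul, ← hf', s.z_mul]
    · refine (Submodule.mem_dualAnnihilator _).2 fun w hw => ?_
      refine (Submodule.span_le (p := LinearMap.ker ((f.flip s.z).comp s.ι))).2 ?_ hw
      rintro _ ⟨a, b, rfl⟩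
      simp [s.ι_mul, hf', s.mul_z]

lemma map_assemble_coboundaries :
    ((Coboundaries B).prod ⊥).map (assemble s.π s.φ) = Coboundaries A := by
  apply le_antisymm
  · rintro _ ⟨⟨g, p⟩, ⟨⟨k, hk⟩, hp⟩, rfl⟩
    obtain rfl : p = 0 := hp
    exact ⟨k.comp s.π, fun x y => by simpa [s.π_mul] using hk _ _⟩
  · rintro f ⟨k, hk⟩
    refine ⟨_, ⟨⟨k.comp s.ι, fun a b => ?_⟩, ?_⟩, s.assemble_components f⟩
    · simp [hk, s.ι_mul]
    · refine Prod.ext ?_ (Prod.ext ?_ ?_)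
      · ext; simp [hk, s.z_mul]
      · ext; simp [hk, s.mul_z]
      · simp [hk, s.z_mul]

lemma tInv_eq (s : CentralSplitting A B) [FiniteDimensional ℂ A] [FiniteDimensional ℂ B]
    (hdim : finrank ℂ A = finrank ℂ B + 1) :
    tInv B + 2 * (finrank ℂ (derivedIdeal B) : ℤ) = tInv A := by
  have hA := multDim_add_finrank A
  have hB := multDim_add_finrank B
  rw [← s.map_assemble_cocycles, ← s.map_assemble_coboundaries,
    ← (Submodule.equivMapOfInjective _ s.assemble_injective _).finrank_eq,
    ← (Submodule.equivMapOfInjective _ s.assemble_injective _).finrank_eq] at hA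
  simp only [finrank_submodule_prod, finrank_bot, finrank_top, finrank_self] at hA
  have hd := Subspace.finrank_add_finrank_dualAnnihilator_eq (derivedIdeal B)
  have key : (multDim A : ℤ) = multDim B + 2 * (finrank ℂ B - finrank ℂ (derivedIdeal B)) + 1 := by
    omega
  simp only [tInv, hdim, key]
  push_cast
  ring

end CentralSplitting

/-- If `A` is nilpotent and finite-dimensional with `Z(A) ⊄ A'`, then `A` splits as an
internal direct sum of ideals `A = I ⊕ Z` with `dim Z = 1` and
`t(I) + 2 dim(I') = t(A)`. -/
theorem exists_ideal_direct_sum_of_center_not_le_derived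
    (A : Type*) [NonUnitalRing A] [Module ℂ A] [SMulCommClass ℂ A A] [IsScalarTower ℂ A A]
    [FiniteDimensional ℂ A]
    (hnil : IsNilpotentAlgebra A) (hZ : ¬ centerSub A ≤ derivedIdeal A) :
    ∃ (I : NonUnitalSubalgebra ℂ A) (Z : Submodule ℂ A),
      IsIdealOf A I.toSubmodule ∧ IsIdealOf A Z ∧
      Module.finrank ℂ ↥Z = 1 ∧ IsCompl I.toSubmodule Z ∧
      (∀ x ∈ I, ∀ z ∈ Z, x * z = 0 ∧ z * x = 0) ∧
      tInv ↥I + 2 * (Module.finrank ℂ ↥(derivedIdeal ↥I) : ℤ) = tInv A := by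
  obtain ⟨z, hzc, hzd⟩ := SetLike.not_le_iff_exists.1 hZ
  obtain ⟨ψ, hψz, hψd⟩ := Submodule.exists_le_ker_of_notMem hzd
  -- rescaled so that `z` has coordinate `1`
  let φ : A →ₗ[ℂ] ℂ := (ψ z)⁻¹ • ψ
  have hφz : φ z = 1 := by simp [φ, hψz]
  have hφm : ∀ x y, φ (x * y) = 0 := fun x y => by
    have : ψ (x * y) = 0 := hψd (mul_mem_derivedIdeal x y)
    simp [φ, this]
  have hz1 : ∀ x, z * x = 0 := fun x => (hzc x).1
  have hz2 : ∀ x, x * z = 0 := fun x => (hzc x).2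
  let I : NonUnitalSubalgebra ℂ A :=
    { LinearMap.ker φ with mul_mem' := fun {x y} _ _ => hφm x y }
  have hI : I.toSubmodule = LinearMap.ker φ := rfl
  have memI : ∀ x, x ∈ I ↔ φ x = 0 := fun x => Iff.rfl
  have hcompl : IsCompl I.toSubmodule (ℂ ∙ z) := by
    rw [hI]
    refine ⟨Submodule.disjoint_def.2 fun x hx hxz => ?_, codisjoint_iff.2 ?_⟩
    · obtain ⟨c, rfl⟩ := Submodule.mem_span_singleton.1 hxz
      have : c = 0 := by simpa [hφz] using hx
      simp [this]
    · refine eq_top_iff.2 fun x _ => Submodule.mem_sup.2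
        ⟨x - φ x • z, by simp [hφz], φ x • z, ?_, by simp⟩
      exact Submodule.smul_mem _ _ (Submodule.mem_span_singleton_self z)
  have hz0 : z ≠ 0 := by
    rintro rfl
    simp at hφz
  have hspan := finrank_span_singleton (K := ℂ) hz0
  have hmulZ : ∀ a, ∀ w ∈ (ℂ ∙ z), a * w = 0 ∧ w * a = 0 := by
    intro a w hw
    obtain ⟨c, rfl⟩ := Submodule.mem_span_singleton.1 hw
    simp [mul_smul_comm, smul_mul_assoc, hz1, hz2]
  have : FiniteDimensional ℂ I := inferInstanceAs (FiniteDimensional ℂ I.toSubmodule)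
  let s : CentralSplitting A I :=
    { ι := I.toSubmodule.subtype
      π :=
        { toFun := fun x => ⟨x - φ x • z, by simp [memI, hφz]⟩
          map_add' := fun x y => Subtype.ext (by simp [add_smul]; abel)
          map_smul' := fun c x => Subtype.ext (by simp [smul_sub, mul_smul]) }
      φ := φ
      z := z
      decomp := fun x => sub_add_cancel x _
      π_ι := fun b => Subtype.ext (by
        have : φ (b : A) = 0 := b.2
        change (b : A) - φ (b : A) • z = b
        simp [this])
      φ_ι := fun b => b.2
      π_z := Subtype.ext (by simp [hφz])
      φ_z := hφz
      ι_mul := fun a b => rfl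
      π_mul := fun x y => Subtype.ext (by
        simp [hφm, sub_mul, mul_sub, mul_smul_comm, smul_mul_assoc, hz1, hz2])
      φ_mul := hφm
      z_mul := hz1
      mul_z := hz2 }
  refine ⟨I, ℂ ∙ z, fun a x _ => ⟨hφm a x, hφm x a⟩, fun a w hw => ?_, hspan, hcompl,
    fun x _ w hw => hmulZ x w hw, s.tInv_eq ?_⟩
  · rw [(hmulZ a w hw).1, (hmulZ a w hw).2]
    exact ⟨zero_mem _, zero_mem _⟩
  · rw [← Submodule.finrank_add_eq_of_isCompl hcompl, hspan]
    rfl
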